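/- Let g_0, g_1 : ℕ → ℕ → ℕ be such that for each n and each i ∈ {0,1} the function k ↦ g_i(n,k) is nondecreasing, and assume that for every n at least one of the functions k ↦ g_0(n,k), k ↦ g_1(n,k) is unbounded. Define a sequence (h_k)_{k∈ℕ} of elements of ℕ → Bool by h_k(n) = true if g_0(n,k) < g_1(n,k) and h_k(n) = false otherwise. Then for every cluster point h : ℕ → Bool of (h_k) in Cantor space (meaning: for every n and every s there exists k ≥ s with h_k(i) = h(i) for all i ≤ n), and for every n: if k ↦ g_0(n,k) is bounded then h(n) = true, and if k ↦ g_1(n,k) is bounded then h(n) = false. -/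

import Mathlib

/-- Combinatorial core of the implication from Bolzano-Weierstraß to
Σ⁰₂-separation: if `g_0(n,·)`, `g_1(n,·)` are nondecreasing, for each `n` at
least one of them is unbounded, and `h_k(n) = (g_0(n,k) < g_1(n,k))`, then any
cluster point `h` of `(h_k)` in Cantor space satisfies `h(n) = true` whenever
`g_0(n,·)` is bounded, and `h(n) = false` whenever `g_1(n,·)` is bounded. -/
theorem bw_separation_core (g₀ g₁ : ℕ → ℕ → ℕ)
    (hmono : ∀ n, Monotone (g₀ n) ∧ Monotone (g₁ n))
    (hunb : ∀ n, (∀ M : ℕ, ∃ k, M < g₀ n k) ∨ (∀ M : ℕ, ∃ k, M < g₁ n k))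
    (hseq : ℕ → ℕ → Bool)
    (hdef : ∀ k n, hseq k n = decide (g₀ n k < g₁ n k))
    (h : ℕ → Bool)
    (hclu : ∀ n : ℕ, ∀ s : ℕ, ∃ k ≥ s, ∀ i ≤ n, hseq k i = h i) :
    ∀ n : ℕ,
      ((∃ M : ℕ, ∀ k, g₀ n k ≤ M) → h n = true) ∧
      ((∃ M : ℕ, ∀ k, g₁ n k ≤ M) → h n = false) := by
  intro n
  refine ⟨?_, ?_⟩
  · rintro ⟨M, hM⟩
    obtain ⟨s, hs⟩ : ∃ s, M < g₁ n s := by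
      rcases hunb n with hu | hu
      · obtain ⟨k, hk⟩ := hu M
        exact absurd hk (not_lt.mpr (hM k))
      · exact hu M
    obtain ⟨k, hk, hi⟩ := hclu n s
    rw [← hi n le_rfl, hdef]
    have h1 := (hmono n).2 hk
    have h2 := hM k
    exact decide_eq_true (by omega)
  · rintro ⟨M, hM⟩
    obtain ⟨s, hs⟩ : ∃ s, M < g₀ n s := by
      rcases hunb n with hu | hu
      · exact hu M
      · obtain ⟨k, hk⟩ := hu M
        exact absurd hk (not_lt.mpr (hM k))
    obtain ⟨k, hk, hi⟩ := hclu n s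
    rw [← hi n le_rfl, hdef]
    have h1 := (hmono n).1 hk
    have h2 := hM k
    exact decide_eq_false (by omega)
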